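/- Let L be a linear Dirac structure on a finite-dimensional real vector space V, and let A ⊕ α ∈ V ⊕ V* satisfy α(A) = 0; set β(X⊕ξ) := α(X) + ξ(A) for X ⊕ ξ ∈ L. Let W = V × ℝ and identify W* with V* × ℝ (so (ξ, c) acts on (X, t) by ξ(X) + ct). Then the subspace L̄ of (W × ℝ) ⊕ (W* × ℝ) spanned by the three families {((X, β(X⊕ξ)), 0) ⊕ ((ξ, 0), 0) : X ⊕ ξ ∈ L}, {((0, −1), 0) ⊕ ((0, 0), 1)}, and {((−A, 0), 1) ⊕ ((−α, 1), 0)} is a linear Dirac-Jacobi structure on W; in particular it is maximal isotropic of dimension dim V + 2. -/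

import Mathlib

noncomputable section

open Module

variable {V : Type} [AddCommGroup V] [Module ℝ V] [FiniteDimensional ℝ V]

/-- The symmetric pairing `⟨X₁⊕ξ₁, X₂⊕ξ₂⟩₊ = (1/2)(ξ₁(X₂) + ξ₂(X₁))` on `V ⊕ V*`. -/
def diracPairing (a b : V × Module.Dual ℝ V) : ℝ :=
  (1 / 2) * (a.2 b.1 + b.2 a.1)

/-- A subspace of `V ⊕ V*` is isotropic if the pairing vanishes on all pairs of its elements. -/
def IsIsotropic (L : Submodule ℝ (V × Module.Dual ℝ V)) : Prop :=
  ∀ a ∈ L, ∀ b ∈ L, diracPairing a b = 0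

/-- A linear Dirac structure on `V`: an isotropic subspace of `V ⊕ V*` that is maximal
among isotropic subspaces. -/
def IsDirac (L : Submodule ℝ (V × Module.Dual ℝ V)) : Prop :=
  IsIsotropic L ∧
    ∀ L' : Submodule ℝ (V × Module.Dual ℝ V), IsIsotropic L' → L ≤ L' → L' = L

/-- The symmetric pairing on `(V × ℝ) ⊕ (V* × ℝ)`:
`⟨(X₁,f₁)⊕(ξ₁,g₁), (X₂,f₂)⊕(ξ₂,g₂)⟩₊ = (1/2)(ξ₁(X₂) + ξ₂(X₁) + g₁f₂ + g₂f₁)`. -/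
def djPairing (a b : (V × ℝ) × (Module.Dual ℝ V × ℝ)) : ℝ :=
  (1 / 2) * (a.2.1 b.1.1 + b.2.1 a.1.1 + a.2.2 * b.1.2 + b.2.2 * a.1.2)

/-- A subspace of `(V × ℝ) ⊕ (V* × ℝ)` is isotropic if the pairing vanishes on all pairs. -/
def IsIsotropicJ (L : Submodule ℝ ((V × ℝ) × (Module.Dual ℝ V × ℝ))) : Prop :=
  ∀ a ∈ L, ∀ b ∈ L, djPairing a b = 0

/-- A linear Dirac-Jacobi structure on `V`: a maximal isotropic subspace of
`(V × ℝ) ⊕ (V* × ℝ)`. -/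
def IsDiracJacobi (L : Submodule ℝ ((V × ℝ) × (Module.Dual ℝ V × ℝ))) : Prop :=
  IsIsotropicJ L ∧
    ∀ L' : Submodule ℝ ((V × ℝ) × (Module.Dual ℝ V × ℝ)), IsIsotropicJ L' → L ≤ L' → L' = L

/-- The identification of `V* × ℝ` with the dual of `W = V × ℝ`:
`(ξ, c)` acts on `(X, t)` by `ξ(X) + c·t`. -/
def dualPair (ξ : Module.Dual ℝ V) (c : ℝ) : Module.Dual ℝ (V × ℝ) :=
  ξ.comp (LinearMap.fst ℝ V ℝ) + c • LinearMap.snd ℝ V ℝ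

/-- The subspace of `(W × ℝ) ⊕ (W* × ℝ)`, `W = V × ℝ`, spanned by the three families
`{((X, β(X⊕ξ)), 0) ⊕ ((ξ, 0), 0) : X⊕ξ ∈ L}` (with `β(X⊕ξ) = α(X) + ξ(A)`),
`((0, −1), 0) ⊕ ((0, 0), 1)`, and `((−A, 0), 1) ⊕ ((−α, 1), 0)`. -/
def preqSpan (L : Submodule ℝ (V × Module.Dual ℝ V)) (A : V) (α : Module.Dual ℝ V) :
    Submodule ℝ ((((V × ℝ) × ℝ)) × (Module.Dual ℝ (V × ℝ) × ℝ)) :=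
  Submodule.span ℝ
    ({z | ∃ (X : V) (ξ : Module.Dual ℝ V), (X, ξ) ∈ L ∧
        z = (((X, α X + ξ A), 0), (dualPair ξ 0, 0))} ∪
      {((((0 : V), (-1 : ℝ)), (0 : ℝ)), ((0 : Module.Dual ℝ (V × ℝ)), (1 : ℝ))),
        (((-A, (0 : ℝ)), (1 : ℝ)), (dualPair (-α) 1, (0 : ℝ)))})

/-!
Parametrize `preqSpan L A α` by `(p, s, t) ∈ L × ℝ × ℝ`, where `s` and `t` are the coefficients of
the last two generators. The pairing of the resulting element with `z = ((Y, τ), f) ⊕ ((η, c), g)`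
is `⟨p, (Y + cA) ⊕ (η + cα)⟩₊ + ½ (s (f - c) + t (τ + g - η(A) - α(Y)))`.

So `z` is orthogonal to the span exactly when `f = c`, `τ + g = η(A) + α(Y)` and
`(Y + cA) ⊕ (η + cα)` is orthogonal to `L`. Since `α(A) = 0`, this last vector is then null whenever
`z` is, hence lies in `L` by maximality, and so `z` lies in the span.

For the dimension, maximality identifies the kernel `{η : 0 ⊕ η ∈ L}` of the projection `L → V` with
the annihilator of its image, so that `dim L = dim V`.
-/

theorem mem_of_maximal_le_orthogonal {R M : Type*} [CommSemiring R] [AddCommMonoid M] [Module R M]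
    {B : LinearMap.BilinForm R M} (hB : B.IsRefl) {L : Submodule R M}
    (hL : Maximal (fun N : Submodule R M ↦ N ≤ B.orthogonal N) L) {z : M}
    (hz : z ∈ B.orthogonal L) (hzz : B z z = 0) : z ∈ L := by
  have isotropic_sup : L ⊔ R ∙ z ≤ B.orthogonal (L ⊔ R ∙ z) := by
    intro _ hb _ ha
    simp only [Submodule.mem_sup, Submodule.mem_span_singleton] at ha hb
    obtain ⟨a, ha, _, ⟨c, rfl⟩, rfl⟩ := ha
    obtain ⟨b, hb, _, ⟨d, rfl⟩, rfl⟩ := hb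
    have hab : B a b = 0 := hL.prop hb a ha
    have haz : B a z = 0 := hz a ha
    have hzb : B z b = 0 := hB _ _ (hz b hb)
    simp [hab, haz, hzb, hzz]
  exact hL.le_of_ge isotropic_sup le_sup_left
    (Submodule.mem_sup_right (Submodule.mem_span_singleton_self z))

theorem finrank_map_fst_add_finrank_comap_inr {K M N : Type*} [DivisionRing K] [AddCommGroup M]
    [Module K M] [AddCommGroup N] [Module K N] (L : Submodule K (M × N)) [FiniteDimensional K L] :
    finrank K (L.map (LinearMap.fst K M N)) + finrank K (L.comap (LinearMap.inr K M N)) =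
      finrank K L := by
  let f : L →ₗ[K] M := (LinearMap.fst K M N).domRestrict L
  let e : L.comap (LinearMap.inr K M N) ≃ₗ[K] LinearMap.ker f :=
    { toFun := fun n ↦ ⟨⟨(0, n), n.2⟩, rfl⟩
      invFun := fun x ↦ ⟨x.1.1.2, by
        have hx : x.1.1.1 = 0 := x.2
        have : (0, x.1.1.2) = x.1.1 := Prod.ext hx.symm rfl
        simp [this]⟩
      map_add' := fun _ _ ↦ by ext <;> simp
      map_smul' := fun _ _ ↦ by ext <;> simp
      left_inv := fun _ ↦ rfl
      right_inv := fun x ↦ Subtype.ext (Subtype.ext (Prod.ext x.2.symm rfl)) }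
  rw [e.finrank_eq, ← LinearMap.range_domRestrict, f.finrank_range_add_finrank_ker]

section AnyDimension

variable {E : Type} [AddCommGroup E] [Module ℝ E]

variable (E) in
/-- The pairing `diracPairing` as a bilinear form. -/
def diracForm : LinearMap.BilinForm ℝ (E × Dual ℝ E) :=
  (1 / 2 : ℝ) • (LinearMap.dualProd ℝ E).compl₁₂
    (LinearEquiv.prodComm ℝ E (Dual ℝ E)).toLinearMap
    (LinearEquiv.prodComm ℝ E (Dual ℝ E)).toLinearMap

theorem diracForm_apply (a b : E × Dual ℝ E) : diracForm E a b = diracPairing a b := by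
  simp [diracForm, diracPairing, add_comm]

theorem isRefl_diracForm : (diracForm E).IsRefl := fun a b h ↦ by
  rw [diracForm_apply, diracPairing] at h ⊢
  rwa [add_comm]

theorem isIsotropic_iff_le_orthogonal {L : Submodule ℝ (E × Dual ℝ E)} :
    IsIsotropic L ↔ L ≤ (diracForm E).orthogonal L := by
  simp only [IsIsotropic, ← diracForm_apply]
  exact forall₂_comm

theorem IsDirac.maximal_le_orthogonal {L : Submodule ℝ (E × Dual ℝ E)} (hL : IsDirac L) :
    Maximal (fun N ↦ N ≤ (diracForm E).orthogonal N) L :=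
  ⟨isIsotropic_iff_le_orthogonal.1 hL.1,
    fun N hN hLN ↦ (hL.2 N (isIsotropic_iff_le_orthogonal.2 hN) hLN).le⟩

theorem IsDirac.mem_of_diracPairing_eq_zero {L : Submodule ℝ (E × Dual ℝ E)} (hL : IsDirac L)
    {z : E × Dual ℝ E} (hz : ∀ a ∈ L, diracPairing a z = 0) (hzz : diracPairing z z = 0) :
    z ∈ L := by
  simp only [← diracForm_apply] at hz hzz
  exact mem_of_maximal_le_orthogonal isRefl_diracForm hL.maximal_le_orthogonal hz hzz

theorem IsDirac.comap_inr {L : Submodule ℝ (E × Dual ℝ E)} (hL : IsDirac L) :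
    L.comap (LinearMap.inr ℝ E (Dual ℝ E)) =
      (L.map (LinearMap.fst ℝ E (Dual ℝ E))).dualAnnihilator := by
  ext η
  rw [Submodule.mem_comap, Submodule.mem_dualAnnihilator]
  constructor
  · rintro hη _ ⟨a, ha, rfl⟩
    simpa [diracPairing] using hL.1 _ hη a ha
  · intro hη
    refine hL.mem_of_diracPairing_eq_zero (fun a ha ↦ ?_) (by simp [diracPairing])
    simpa [diracPairing] using hη a.1 ⟨a, ha, rfl⟩

theorem dualPair_apply (ξ : Dual ℝ E) (c : ℝ) (x : E × ℝ) :
    dualPair ξ c x = ξ x.1 + c * x.2 := by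
  simp [dualPair]

theorem dualPair_comp_inl (θ : Dual ℝ (E × ℝ)) :
    dualPair (θ ∘ₗ LinearMap.inl ℝ E ℝ) (θ (0, 1)) = θ := by
  have map_zero_prod : θ (0, 0) = 0 := map_zero θ
  ext <;> simp [dualPair_apply, map_zero_prod]

/-- The linear map whose restriction to `L × ℝ × ℝ` parametrizes `preqSpan L A α`: in `(p, s, t)`,
`s` and `t` are the coefficients of the generators `((0, -1), 0) ⊕ ((0, 0), 1)` and
`((-A, 0), 1) ⊕ ((-α, 1), 0)`. -/
def preqParam (A : E) (α : Dual ℝ E) :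
    (E × Dual ℝ E) × ℝ × ℝ →ₗ[ℝ] ((E × ℝ) × ℝ) × (Dual ℝ (E × ℝ) × ℝ) where
  toFun x := (((x.1.1 - x.2.2 • A, α x.1.1 + x.1.2 A - x.2.1), x.2.2),
    (dualPair (x.1.2 - x.2.2 • α) x.2.2, x.2.1))
  map_add' x y := by
    simp only [dualPair, Prod.fst_add, Prod.snd_add, Prod.mk_add_mk, Prod.mk.injEq, map_add,
      LinearMap.add_apply, LinearMap.add_comp, LinearMap.sub_comp, LinearMap.smul_comp]
    exact ⟨⟨⟨by module, by ring⟩, trivial⟩, by module, trivial⟩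
  map_smul' r x := by
    simp only [dualPair, Prod.smul_fst, Prod.smul_snd, Prod.smul_mk, Prod.mk.injEq, map_smul,
      LinearMap.smul_apply, LinearMap.sub_comp, LinearMap.smul_comp, smul_eq_mul,
      RingHom.id_apply]
    exact ⟨⟨⟨by module, by ring⟩, trivial⟩, by module, trivial⟩

theorem preqParam_apply (A : E) (α : Dual ℝ E) (p : E × Dual ℝ E) (s t : ℝ) :
    preqParam A α (p, s, t) =
      (((p.1 - t • A, α p.1 + p.2 A - s), t), (dualPair (p.2 - t • α) t, s)) :=
  rfl

theorem preqParam_injective (A : E) (α : Dual ℝ E) : Function.Injective (preqParam A α) := by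
  rw [injective_iff_map_eq_zero]
  rintro ⟨⟨X, ξ⟩, s, t⟩ h
  simp only [preqParam_apply, Prod.ext_iff, Prod.fst_zero, Prod.snd_zero] at h
  obtain ⟨⟨⟨hX, -⟩, rfl⟩, hξ, rfl⟩ := h
  have hξ : ξ = 0 := by
    ext x
    simpa [dualPair_apply] using LinearMap.congr_fun hξ (x, 0)
  simpa [hξ] using hX

theorem range_preqParam_comp_subtype (L : Submodule ℝ (E × Dual ℝ E)) (A : E) (α : Dual ℝ E) :
    LinearMap.range (preqParam A α ∘ₗ L.subtype.prodMap LinearMap.id) = preqSpan L A α := by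
  apply le_antisymm
  · rintro _ ⟨⟨⟨⟨X, ξ⟩, hp⟩, s, t⟩, rfl⟩
    have decomposition : preqParam A α ((X, ξ), s, t) =
        (((X, α X + ξ A), 0), (dualPair ξ 0, 0)) + s • (((0, -1), 0), (0, 1)) +
          t • (((-A, 0), 1), (dualPair (-α) 1, 0)) := by
      ext <;> simp [preqParam_apply, dualPair_apply] <;> module
    change preqParam A α ((X, ξ), s, t) ∈ _
    rw [decomposition]
    exact add_mem (add_mem (Submodule.subset_span (.inl ⟨X, ξ, hp, rfl⟩))
      (Submodule.smul_mem _ s (Submodule.subset_span (.inr (.inl rfl)))))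
      (Submodule.smul_mem _ t (Submodule.subset_span (.inr (.inr rfl))))
  · refine Submodule.span_le.2 ?_
    rintro _ (⟨X, ξ, hp, rfl⟩ | rfl | rfl)
    · exact ⟨(⟨(X, ξ), hp⟩, 0, 0), by simp [preqParam_apply]⟩
    · exact ⟨(0, 1, 0), by simp [preqParam, dualPair]⟩
    · exact ⟨(0, 0, 1), by simp [preqParam]⟩

theorem mem_preqSpan {L : Submodule ℝ (E × Dual ℝ E)} {A : E} {α : Dual ℝ E}
    {z : ((E × ℝ) × ℝ) × (Dual ℝ (E × ℝ) × ℝ)} :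
    z ∈ preqSpan L A α ↔ ∃ p ∈ L, ∃ s t, preqParam A α (p, s, t) = z := by
  simp [← range_preqParam_comp_subtype]

theorem rank_preqSpan (L : Submodule ℝ (E × Dual ℝ E)) (A : E) (α : Dual ℝ E) :
    Module.rank ℝ (preqSpan L A α) = Module.rank ℝ L + 2 := by
  have injective : Function.Injective (preqParam A α ∘ₗ L.subtype.prodMap LinearMap.id) :=
    (preqParam_injective A α).comp (L.injective_subtype.prodMap Function.injective_id)
  have : Free ℝ L := .of_divisionRing ℝ L
  rw [← range_preqParam_comp_subtype, rank_range_of_injective _ injective, rank_prod', rank_prod',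
    rank_self, one_add_one_eq_two]

theorem djPairing_preqParam (A : E) (α : Dual ℝ E) (p : E × Dual ℝ E) (s t : ℝ) (Y : E) (τ f : ℝ)
    (η : Dual ℝ E) (c g : ℝ) :
    djPairing (preqParam A α (p, s, t)) (((Y, τ), f), (dualPair η c, g)) =
      diracPairing p (Y + c • A, η + c • α) +
        1 / 2 * (s * (f - c) + t * (τ + g - η A - α Y)) := by
  simp only [djPairing, diracPairing, preqParam_apply, dualPair_apply, map_add, map_sub, map_smul,
    LinearMap.add_apply, LinearMap.sub_apply, LinearMap.smul_apply, smul_eq_mul]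
  ring

theorem djPairing_preqParam_preqParam {A : E} {α : Dual ℝ E} (hα : α A = 0) (p q : E × Dual ℝ E)
    (s t s' t' : ℝ) :
    djPairing (preqParam A α (p, s, t)) (preqParam A α (q, s', t')) = diracPairing p q := by
  rw [preqParam_apply A α q, djPairing_preqParam]
  simp [hα]

theorem isIsotropicJ_preqSpan {L : Submodule ℝ (E × Dual ℝ E)} (hL : IsIsotropic L) {A : E}
    {α : Dual ℝ E} (hα : α A = 0) : IsIsotropicJ (preqSpan L A α) := by
  intro a ha b hb
  obtain ⟨p, hp, s, t, rfl⟩ := mem_preqSpan.1 ha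
  obtain ⟨q, hq, s', t', rfl⟩ := mem_preqSpan.1 hb
  rw [djPairing_preqParam_preqParam hα, hL p hp q hq]

theorem mem_preqSpan_of_djPairing_eq_zero {L : Submodule ℝ (E × Dual ℝ E)} (hL : IsDirac L)
    {A : E} {α : Dual ℝ E} (hα : α A = 0) {z : ((E × ℝ) × ℝ) × (Dual ℝ (E × ℝ) × ℝ)}
    (hz : ∀ a ∈ preqSpan L A α, djPairing a z = 0) (hzz : djPairing z z = 0) :
    z ∈ preqSpan L A α := by
  obtain ⟨⟨⟨Y, τ⟩, f⟩, θ, g⟩ := z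
  obtain ⟨η, c, rfl⟩ : ∃ η c, θ = dualPair η c := ⟨_, _, (dualPair_comp_inl θ).symm⟩
  have orthogonal (p) (hp : p ∈ L) (s t : ℝ) :
      diracPairing p (Y + c • A, η + c • α) +
        1 / 2 * (s * (f - c) + t * (τ + g - η A - α Y)) = 0 := by
    rw [← djPairing_preqParam]
    exact hz _ (mem_preqSpan.2 ⟨p, hp, s, t, rfl⟩)
  obtain rfl : f = c := by
    simpa [diracPairing, sub_eq_zero] using orthogonal 0 L.zero_mem 1 0
  have hτg : τ + g = η A + α Y := by
    simpa [diracPairing, sub_sub, sub_eq_zero] using orthogonal 0 L.zero_mem 0 1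
  have null : diracPairing (Y + f • A, η + f • α) (Y + f • A, η + f • α) = 0 := by
    simp only [djPairing, dualPair_apply] at hzz
    simp only [diracPairing, map_add, map_smul, LinearMap.add_apply, LinearMap.smul_apply,
      smul_eq_mul, hα]
    linear_combination hzz - f * hτg
  have mem_L : (Y + f • A, η + f • α) ∈ L :=
    hL.mem_of_diracPairing_eq_zero (fun a ha ↦ by simpa using orthogonal a ha 0 0) null
  refine mem_preqSpan.2 ⟨_, mem_L, g, f, ?_⟩
  have hτ : α Y + η A - g = τ := by linear_combination -hτg
  simp [preqParam_apply, hα, hτ]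

theorem preq_span_is_dirac_jacobi_general (L : Submodule ℝ (E × Dual ℝ E)) (hL : IsDirac L)
    (A : E) (α : Dual ℝ E) (hα : α A = 0) :
    IsDiracJacobi (preqSpan L A α) ∧
      Module.rank ℝ (preqSpan L A α) = Module.rank ℝ L + 2 := by
  refine ⟨⟨isIsotropicJ_preqSpan hL.1 hα, fun L' hL' hle ↦ ?_⟩, rank_preqSpan L A α⟩
  refine le_antisymm (fun z hz ↦ ?_) hle
  exact mem_preqSpan_of_djPairing_eq_zero hL hα (fun a ha ↦ hL' a (hle ha) z hz) (hL' z hz z hz)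

end AnyDimension

theorem IsDirac.finrank_eq {L : Submodule ℝ (V × Dual ℝ V)} (hL : IsDirac L) :
    finrank ℝ L = finrank ℝ V := by
  rw [← finrank_map_fst_add_finrank_comap_inr, hL.comap_inr,
    Subspace.finrank_add_finrank_dualAnnihilator_eq]

/-- Pointwise prequantization: for a linear Dirac structure `L` on `V` and an
isotropic element `A ⊕ α` (`α(A) = 0`), the subspace `preqSpan L A α` of
`(W × ℝ) ⊕ (W* × ℝ)`, `W = V × ℝ`, is a linear Dirac-Jacobi structure on `W`; in
particular it is maximal isotropic of dimension `dim V + 2`. -/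
theorem preq_span_is_dirac_jacobi (L : Submodule ℝ (V × Module.Dual ℝ V)) (hL : IsDirac L)
    (A : V) (α : Module.Dual ℝ V) (hα : α A = 0) :
    IsDiracJacobi (preqSpan L A α) ∧
      Module.finrank ℝ (preqSpan L A α) = Module.finrank ℝ V + 2 := by
  obtain ⟨hJ, hrank⟩ := preq_span_is_dirac_jacobi_general L hL A α hα
  exact ⟨hJ, finrank_eq_of_rank_eq (by simp [hrank, ← hL.finrank_eq])⟩
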